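/- An ELKh_n formula φ0 is satisfiable in some model if and only if the tableau T_{φ0} is not closed (i.e. some complete subtree of T_{φ0} contains no node with a blatantly inconsistent label). -/

import Mathlib

/-!
Formalization of the logic of strategically knowing how (ELKh_n) and of the
tableau procedure for it.
-/

namespace ELKh

/-- Formulas of the language ELKh_n:
`φ ::= ⊥ | p | ¬φ | (φ ∧ φ) | K_i φ | Kh_i φ`. -/
inductive Formula (P I : Type) : Type
  | bot : Formula P I
  | atom : P → Formula P I
  | neg : Formula P I → Formula P I
  | and : Formula P I → Formula P I → Formula P I
  | know : I → Formula P I → Formula P I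
  | kh : I → Formula P I → Formula P I

variable {P I : Type}

/-- Models of ELKh_n: states with equivalence relations `∼ᵢ`, actions for each
agent, a transition relation for each action, and a valuation. -/
structure Model (P I : Type) where
  W : Type
  sim : I → W → W → Prop
  equiv : ∀ i, Equivalence (sim i)
  Act : I → Type
  R : (i : I) → Act i → W → W → Prop
  V : W → P → Prop

/-- Transition between `i`-equivalence classes (classes are represented by
member states): `[s]ⁱ →ₐ [t]ⁱ` iff some `s' ∈ [s]ⁱ`, `t' ∈ [t]ⁱ` have `R a s' t'`. -/
def Model.ctrans (M : Model P I) (i : I) (a : M.Act i) (s t : M.W) : Prop :=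
  ∃ s' t', M.sim i s s' ∧ M.sim i t t' ∧ M.R i a s' t'

/-- Uniformly executable strategies for agent `i`: partial functions from
`∼ᵢ`-equivalence classes to actions of `i` (hence constant on classes), whose
chosen action is executable at every member of the class. -/
structure Strategy (M : Model P I) (i : I) where
  act : M.W → Option (M.Act i)
  congr : ∀ s t, M.sim i s t → act s = act t
  exec : ∀ s a, act s = some a → ∀ t, M.sim i s t → ∃ u, M.R i a t u

namespace Strategy

variable {M : Model P I} {i : I}

/-- The `k`-th step of the sequence of classes `[δ 0][δ 1]⋯` is a σ-step. -/
def Steps (σ : Strategy M i) (δ : ℕ → M.W) (k : ℕ) : Prop :=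
  ∃ a, σ.act (δ k) = some a ∧ M.ctrans i a (δ k) (δ (k+1))

/-- `[δ 0]⋯[δ h]` is a (finite) possible execution of σ. -/
def FinExec (σ : Strategy M i) (δ : ℕ → M.W) (h : ℕ) : Prop :=
  ∀ k < h, σ.Steps δ k

/-- `[δ 0]⋯[δ h]` is a complete finite execution of σ (its end class is not in
the domain of σ). -/
def CompleteFinExec (σ : Strategy M i) (δ : ℕ → M.W) (h : ℕ) : Prop :=
  σ.FinExec δ h ∧ σ.act (δ h) = none

/-- `[δ 0][δ 1]⋯` is an infinite possible execution of σ (such an execution is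
automatically complete). -/
def InfExec (σ : Strategy M i) (δ : ℕ → M.W) : Prop :=
  ∀ k, σ.Steps δ k

end Strategy

/-- Satisfaction for ELKh_n.  `Kh_i φ` holds at `s` iff there is a strategy σ
for `i` such that all complete executions of σ starting from `[s]ⁱ` are finite
(equivalently: there is no infinite execution of σ from `[s]ⁱ`) and every state
of every end class of a complete (finite) execution from `[s]ⁱ` satisfies `φ`. -/
def Sat (M : Model P I) : M.W → Formula P I → Prop
  | _, .bot => False
  | s, .atom p => M.V s p
  | s, .neg φ => ¬ Sat M s φ
  | s, .and φ ψ => Sat M s φ ∧ Sat M s ψ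
  | s, .know i φ => ∀ t, M.sim i s t → Sat M t φ
  | s, .kh i φ => ∃ σ : Strategy M i,
      (∀ δ : ℕ → M.W, M.sim i s (δ 0) → ¬ σ.InfExec δ) ∧
      (∀ (δ : ℕ → M.W) (h : ℕ), M.sim i s (δ 0) → σ.CompleteFinExec δ h →
        ∀ t, M.sim i (δ h) t → Sat M t φ)

/-! ### Subformulas -/

/-- The set of subformulas of a formula. -/
def subf : Formula P I → Set (Formula P I)
  | .bot => {Formula.bot}
  | .atom p => {Formula.atom p}
  | .neg φ => insert (Formula.neg φ) (subf φ)
  | .and φ ψ => insert (Formula.and φ ψ) (subf φ ∪ subf ψ)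
  | .know i φ => insert (Formula.know i φ) (subf φ)
  | .kh i φ => insert (Formula.kh i φ) (subf φ)

/-- `sub⁺(φ₀) = {ψ, ¬ψ : ψ subformula of φ₀} ∪ {Kᵢψ, ¬Kᵢψ : Khᵢψ subformula of φ₀}`. -/
def subPlus (φ0 : Formula P I) : Set (Formula P I) :=
  {χ | ∃ ψ ∈ subf φ0, χ = ψ ∨ χ = Formula.neg ψ} ∪
  {χ | ∃ i ψ, Formula.kh i ψ ∈ subf φ0 ∧
      (χ = Formula.know i ψ ∨ χ = Formula.neg (Formula.know i ψ))}

/-- `∼ψ`:  `∼¬χ = χ`, and `∼ψ = ¬ψ` otherwise. -/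
def simNeg : Formula P I → Formula P I
  | .neg χ => χ
  | ψ => Formula.neg ψ

/-! ### Labeled trees -/

/-- Labels of tableau edges: `ε`, an agent `i`, or an action `a_{Khᵢψ}`. -/
inductive ELabel (P I : Type) : Type
  | eps : ELabel P I
  | ag : I → ELabel P I
  | act : I → Formula P I → ELabel P I

/-- Labeled rooted trees: each node is labeled with a set of formulas, each
non-root node carries the label of the edge connecting it to its parent, and
`blockedBy n = some n'` records that the node `n` is blocked by `n'`. -/
structure LTree (P I : Type) where
  Node : Type
  root : Node
  parent : Node → Option Node
  depth : Node → ℕ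
  label : Node → Set (Formula P I)
  elabel : Node → ELabel P I
  blockedBy : Node → Option Node
  parent_root : parent root = none
  eq_root : ∀ n, parent n = none → n = root
  depth_root : depth root = 0
  depth_parent : ∀ n m, parent n = some m → depth n = depth m + 1

variable (T : LTree P I)

/-- The children of a node. -/
def Children (n : T.Node) : Set T.Node := {m | T.parent m = some n}

/-- A node is a leaf iff it has no children. -/
def IsLeaf (n : T.Node) : Prop := ∀ m, T.parent m ≠ some n

/-- `Ancestor T m n`: `m` is a proper ancestor of `n`. -/
def Ancestor (m n : T.Node) : Prop :=
  Relation.TransGen (fun a b => T.parent b = some a) m n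

/-- `IAnc T i m n`: `m` is an `i`-ancestor of `n`, i.e. a proper ancestor of
`n` connected to `n` by a path all of whose edges are labeled `i` or `ε`. -/
inductive IAnc (i : I) : T.Node → T.Node → Prop
  | single {m n} : T.parent n = some m →
      (T.elabel n = ELabel.eps ∨ T.elabel n = ELabel.ag i) → IAnc i m n
  | cons {m k n} : T.parent n = some k →
      (T.elabel n = ELabel.eps ∨ T.elabel n = ELabel.ag i) →
      IAnc i m k → IAnc i m n

/-! ### The tableau construction -/

/-- A set of formulas is blatantly inconsistent iff it contains `⊥` or some
pair `ψ, ¬ψ`. -/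
def Blatant (Γ : Set (Formula P I)) : Prop :=
  Formula.bot ∈ Γ ∨ ∃ ψ, ψ ∈ Γ ∧ Formula.neg ψ ∈ Γ

/-- `AutoChecked Γ φ` holds iff none of the expansion rules (a)-(g) is
applicable to `φ` in the label `Γ`; such formulas are (and remain) marked
``checked'' by step (h) of the construction. -/
def AutoChecked (Γ : Set (Formula P I)) : Formula P I → Prop
  | .neg (.neg ψ) => ψ ∈ Γ
  | .and ψ χ => ψ ∈ Γ ∧ χ ∈ Γ
  | .neg (.and ψ χ) =>
      (Formula.neg ψ ∈ Γ ∧ Formula.neg χ ∈ Γ) ∨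
      (Formula.neg ψ ∈ Γ ∧ χ ∈ Γ) ∨ (ψ ∈ Γ ∧ Formula.neg χ ∈ Γ)
  | .know _ ψ => ψ ∈ Γ
  | .neg (.know _ ψ) => Formula.neg ψ ∈ Γ ∨ ψ ∈ Γ
  | .kh i ψ => Formula.neg (Formula.know i ψ) ∈ Γ ∨ Formula.know i ψ ∈ Γ
  | .neg (.kh i ψ) => Formula.neg (Formula.know i ψ) ∈ Γ
  | _ => True

/-- All formulas of `Γ` are checked; nodes with such labels are the ``and''
nodes (expanded by step (2)), the remaining expanded nodes are ``or'' nodes. -/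
def Saturated (Γ : Set (Formula P I)) : Prop := ∀ φ ∈ Γ, AutoChecked Γ φ

/-- The labels of the children created when one of the rules (a)-(g) processes
the formula `φ` at a node labeled `Γ`. -/
def orOut (Γ : Set (Formula P I)) : Formula P I → Set (Set (Formula P I))
  | .neg (.neg ψ) => {insert ψ Γ}
  | .and ψ χ => {insert ψ (insert χ Γ)}
  | .neg (.and ψ χ) =>
      {insert (Formula.neg ψ) (insert (Formula.neg χ) Γ),
       insert (Formula.neg ψ) (insert χ Γ),
       insert ψ (insert (Formula.neg χ) Γ)}
  | .know _ ψ => {insert ψ Γ}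
  | .neg (.know _ ψ) => {insert (Formula.neg ψ) Γ, insert ψ Γ}
  | .kh i ψ =>
      {insert (Formula.neg (Formula.know i ψ)) Γ, insert (Formula.know i ψ) Γ}
  | .neg (.kh i ψ) => {insert (Formula.neg (Formula.know i ψ)) Γ}
  | _ => ∅

/-- `Σ(n,¬Kᵢψ) = {¬ψ} ∪ Γ|Kᵢ ∪ Γ|¬Kᵢ ∪ Γ|Khᵢ ∪ Γ|¬Khᵢ` where `Γ = L(n)`. -/
def SigmaSet (Γ : Set (Formula P I)) (i : I) (ψ : Formula P I) :
    Set (Formula P I) :=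
  insert (Formula.neg ψ)
    {φ ∈ Γ | (∃ χ, φ = Formula.know i χ) ∨ (∃ χ, φ = Formula.neg (Formula.know i χ)) ∨
             (∃ χ, φ = Formula.kh i χ) ∨ (∃ χ, φ = Formula.neg (Formula.kh i χ))}

/-- Expansion condition for ``or'' nodes (step (1), rules (a)-(g)): some
unchecked formula of the label is processed and the children of the node are
exactly the prescribed `ε`-children. -/
def OrNodeCond (n : T.Node) : Prop :=
  ∃ φ ∈ T.label n, ¬ AutoChecked (T.label n) φ ∧
    (∀ Δ ∈ orOut (T.label n) φ,
      ∃ m, T.parent m = some n ∧ T.elabel m = ELabel.eps ∧ T.label m = Δ ∧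
        T.blockedBy m = none) ∧
    (∀ m, T.parent m = some n →
      T.elabel m = ELabel.eps ∧ T.label m ∈ orOut (T.label n) φ ∧
        T.blockedBy m = none)

/-- Expansion condition for ``and'' nodes (step (2), rules (i), (j), (k)): the
children of the node are exactly those prescribed by the three rules, and a
(k)-child is blocked iff some ancestor carries the same label. -/
def AndNodeCond (n : T.Node) : Prop :=
  (∀ i ψ, Formula.neg (Formula.know i ψ) ∈ T.label n →
    ¬ (∃ n', IAnc T i n' n ∧ T.label n' = SigmaSet (T.label n) i ψ) →
    ∃ m, T.parent m = some n ∧ T.elabel m = ELabel.ag i ∧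
      T.label m = SigmaSet (T.label n) i ψ ∧ T.blockedBy m = none) ∧
  (∀ i ψ, Formula.kh i ψ ∈ T.label n → Formula.neg (Formula.know i ψ) ∈ T.label n →
    ∃ m, T.parent m = some n ∧ T.elabel m = ELabel.act i ψ ∧
      T.label m = {Formula.know i ψ} ∧ T.blockedBy m = none) ∧
  (∀ i ψ χ, Formula.neg (Formula.kh i χ) ∈ T.label n →
    Formula.kh i ψ ∈ T.label n → Formula.neg (Formula.know i ψ) ∈ T.label n →
    ∃ m, T.parent m = some n ∧ T.elabel m = ELabel.act i ψ ∧
      T.label m = {Formula.know i ψ, Formula.neg (Formula.kh i χ)} ∧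
      ((∃ n', Ancestor T n' m ∧ T.label n' = T.label m) ↔ T.blockedBy m ≠ none)) ∧
  (∀ m, T.parent m = some n →
    (∃ i ψ, T.elabel m = ELabel.ag i ∧ Formula.neg (Formula.know i ψ) ∈ T.label n ∧
      T.label m = SigmaSet (T.label n) i ψ ∧
      ¬ (∃ n', IAnc T i n' n ∧ T.label n' = SigmaSet (T.label n) i ψ)) ∨
    (∃ i ψ, T.elabel m = ELabel.act i ψ ∧ Formula.kh i ψ ∈ T.label n ∧
      Formula.neg (Formula.know i ψ) ∈ T.label n ∧
      T.label m = {Formula.know i ψ}) ∨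
    (∃ i ψ χ, T.elabel m = ELabel.act i ψ ∧ Formula.neg (Formula.kh i χ) ∈ T.label n ∧
      Formula.kh i ψ ∈ T.label n ∧ Formula.neg (Formula.know i ψ) ∈ T.label n ∧
      T.label m = {Formula.know i ψ, Formula.neg (Formula.kh i χ)}))

/-- `T` is a tableau for `φ₀`: the root is labeled `{φ₀}`, blocked nodes are
blocked by an ancestor with the same label, blocked nodes and blatantly
inconsistent nodes are leaves, and every other node is expanded according to
step (1) (``or'' nodes) or step (2) (``and'' nodes) of the construction. -/
structure IsTableau (φ0 : Formula P I) (T : LTree P I) : Prop where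
  root_label : T.label T.root = {φ0}
  blocked_spec : ∀ n n', T.blockedBy n = some n' →
    Ancestor T n' n ∧ T.label n' = T.label n
  blocked_leaf : ∀ n, T.blockedBy n ≠ none → IsLeaf T n
  blatant_leaf : ∀ n, Blatant (T.label n) → IsLeaf T n
  or_node : ∀ n, ¬ Blatant (T.label n) → T.blockedBy n = none →
    ¬ Saturated (T.label n) → OrNodeCond T n
  and_node : ∀ n, ¬ Blatant (T.label n) → T.blockedBy n = none →
    Saturated (T.label n) → AndNodeCond T n

/-! ### Subtrees -/

/-- A subtree: a set of nodes containing the root and closed under parents. -/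
def IsSubtree (S : Set T.Node) : Prop :=
  T.root ∈ S ∧ ∀ n ∈ S, ∀ m, T.parent n = some m → m ∈ S

/-- A complete subtree: it contains the root, all children of each of its
``and'' non-leaf nodes, and at least one child of each of its ``or'' non-leaf
nodes. -/
def CompleteSubtree (S : Set T.Node) : Prop :=
  IsSubtree T S ∧
  (∀ n ∈ S, ¬ IsLeaf T n → Saturated (T.label n) → ∀ m ∈ Children T n, m ∈ S) ∧
  (∀ n ∈ S, ¬ IsLeaf T n → ¬ Saturated (T.label n) → ∃ m ∈ Children T n, m ∈ S)

/-- A subtree is closed iff some of its nodes has a blatantly inconsistent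
label; otherwise it is open. -/
def ClosedSubtree (S : Set T.Node) : Prop := ∃ n ∈ S, Blatant (T.label n)

/-- A tableau is closed iff all its complete subtrees are closed. -/
def TableauClosed : Prop := ∀ S : Set T.Node, CompleteSubtree T S → ClosedSubtree T S

/-! ### Maximal ε-paths and the induced model -/

/-- An `ε`-edge from `m` down to `n` inside the node set `S`. -/
def EpsStep (S : Set T.Node) (m n : T.Node) : Prop :=
  m ∈ S ∧ n ∈ S ∧ T.parent n = some m ∧ T.elabel n = ELabel.eps

/-- `n` is an `ε`-descendant of `m` inside `S` (reflexive-transitive). -/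
def EpsDesc (S : Set T.Node) : T.Node → T.Node → Prop :=
  Relation.ReflTransGen (EpsStep T S)

/-- A maximal `ε`-path of the subtree with node set `S`, recorded by its
initial node `top` and its end node `bot`.  Its label is `T.label bot`. -/
structure MaxEpsPath (T : LTree P I) (S : Set T.Node) where
  top : T.Node
  bot : T.Node
  top_mem : top ∈ S
  bot_mem : bot ∈ S
  desc : EpsDesc T S top bot
  top_max : ∀ m, ¬ EpsStep T S m top
  bot_max : ∀ m, ¬ EpsStep T S bot m

/-- The states of the induced model: non-blocked maximal `ε`-paths. -/
def PathW (T : LTree P I) (S : Set T.Node) : Type :=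
  {ρ : MaxEpsPath T S // T.blockedBy ρ.bot = none}

/-- `ρ₂` is an `i`-child path of `ρ₁`: `ρ₁ρ₂` is a path whose connecting edge
is labeled `i`. -/
def ISimStep (S : Set T.Node) (i : I) (ρ1 ρ2 : PathW T S) : Prop :=
  T.parent ρ2.1.top = some ρ1.1.bot ∧ T.elabel ρ2.1.top = ELabel.ag i

/-- The node `n'` lies on the maximal `ε`-path `ρ`. -/
def OnPath (S : Set T.Node) (ρ : MaxEpsPath T S) (n' : T.Node) : Prop :=
  EpsDesc T S ρ.top n' ∧ EpsDesc T S n' ρ.bot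

/-- The model `M^T` induced by the (complete) subtree with node set `S`:
states are the non-blocked maximal `ε`-paths, `∼ᵢ` is the least equivalence
relation containing the `i`-edge steps, actions of agent `i` are the actions
`a_{Khᵢψ}` labeling edges of the subtree, `(ρ, ρ') ∈ R_a` iff there is an
`a`-edge from the end of `ρ` to the start of a maximal `ε`-path `ρ''` where
`ρ'' = ρ'` or `ρ''` is blocked by a node lying on `ρ'`, and `ρ ∈ V(p)` iff
`p ∈ L(ρ)`. -/
def inducedModel (T : LTree P I) (S : Set T.Node) : Model P I where
  W := PathW T S
  sim := fun i => Relation.EqvGen (ISimStep T S i)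
  equiv := fun _ => Relation.EqvGen.is_equivalence _
  Act := fun i => {ψ : Formula P I // ∃ m n, m ∈ S ∧ n ∈ S ∧
    T.parent m = some n ∧ T.elabel m = ELabel.act i ψ}
  R := fun i a ρ1 ρ2 => ∃ ρ'' : MaxEpsPath T S,
    T.parent ρ''.top = some ρ1.1.bot ∧ T.elabel ρ''.top = ELabel.act i a.1 ∧
    (ρ'' = ρ2.1 ∨ ∃ n', T.blockedBy ρ''.bot = some n' ∧ OnPath T S ρ2.1 n')
  V := fun ρ p => Formula.atom p ∈ T.label ρ.1.bot

/-- `L(ρ)|Kᵢ`: the `Kᵢ`-formulas of `Γ`. -/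
def projK (i : I) (Γ : Set (Formula P I)) : Set (Formula P I) :=
  {φ ∈ Γ | ∃ ψ, φ = Formula.know i ψ}

/-- `L(ρ)|¬Kᵢ`: the `¬Kᵢ`-formulas of `Γ`. -/
def projNK (i : I) (Γ : Set (Formula P I)) : Set (Formula P I) :=
  {φ ∈ Γ | ∃ ψ, φ = Formula.neg (Formula.know i ψ)}

/-- `L(ρ)|Khᵢ`: the `Khᵢ`-formulas of `Γ`. -/
def projKh (i : I) (Γ : Set (Formula P I)) : Set (Formula P I) :=
  {φ ∈ Γ | ∃ ψ, φ = Formula.kh i ψ}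

/-- `L(ρ)|¬Khᵢ`: the `¬Khᵢ`-formulas of `Γ`. -/
def projNKh (i : I) (Γ : Set (Formula P I)) : Set (Formula P I) :=
  {φ ∈ Γ | ∃ ψ, φ = Formula.neg (Formula.kh i ψ)}

/-!
`Khᵢφ` holds exactly at the states from which agent `i` wins the reachability game whose target is
`Kᵢφ`, and this winning region, the attractor of the target, is a least fixed point. Playing an
action that decreases the ordinal rank in the fixed point iteration is a uniformly executable
strategy without infinite executions, so strategies can be eliminated from both directions.

If `φ₀` is satisfiable, the nodes such that all labels on their branch are satisfiable form an open
complete subtree. For rule (k), if every state with `Kᵢψ` were in the attractor for `χ`, the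
attractor for `ψ` would be included in it, contradicting `Khᵢψ ∧ ¬Khᵢχ`.

Conversely, the saturated labels of an open complete subtree are the states of a model in which
`∼ᵢ` is agreement on all formulas `Kᵢψ`, `¬Kᵢψ`, `Khᵢψ`, `¬Khᵢψ`. Every label of the subtree extends
to a saturated one within any superset closed under the expansion rules; applied to the child for
`¬Kᵢψ` and the formulas decided by its parent's label, this gives a witness that decides no new
formula about `i`.
-/

/-! ### Ranks of least fixed points -/

section LfpRank

universe u

open OrdinalApprox

variable {α : Type u} (f : Set α →o Set α)

/-- The first stage of the transfinite iteration of `f` from `∅` that contains `s`; it is the junk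
value `0` when `s` is not in the least fixed point. -/
noncomputable def lfpRank (s : α) : Ordinal.{u} :=
  sInf {a | s ∈ lfpApprox f ⊥ a}

variable {f}

theorem mem_lfpApprox_bot_iff {s : α} {a : Ordinal.{u}} :
    s ∈ lfpApprox f ⊥ a ↔ ∃ b < a, s ∈ f (lfpApprox f ⊥ b) := by
  rw [lfpApprox]
  simp

theorem lfpRank_congr {s t : α} (h : ∀ X, s ∈ f X ↔ t ∈ f X) : lfpRank f s = lfpRank f t := by
  simp only [lfpRank, mem_lfpApprox_bot_iff, h]

theorem mem_apply_lfpRank_lt {s : α} (hs : s ∈ f.lfp) :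
    s ∈ f {t ∈ f.lfp | lfpRank f t < lfpRank f s} := by
  have hne : {a | s ∈ lfpApprox f ⊥ a}.Nonempty := by
    obtain ⟨a, ha⟩ := lfp_mem_range_lfpApprox f
    exact ⟨a, ha.ge hs⟩
  have hrank : s ∈ lfpApprox f ⊥ (lfpRank f s) := csInf_mem hne
  obtain ⟨b, hb, hsb⟩ := mem_lfpApprox_bot_iff.1 hrank
  have hstage : lfpApprox f ⊥ b ⊆ {t ∈ f.lfp | lfpRank f t < lfpRank f s} := fun t ht =>
    ⟨lfpApprox_le_of_mem_fixedPoints f f.isFixedPt_lfp bot_le b ht,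
      (csInf_le' (s := {a | t ∈ lfpApprox f ⊥ a}) ht).trans_lt hb⟩
  exact f.monotone hstage hsb

end LfpRank

/-! ### Knowing how as reachability in a game -/

namespace Model

variable (M : Model P I) (i : I)

/-- The states at which agent `i` knows the proposition `Q`, i.e. those whose `i`-class is included
in `Q`. -/
def knows (Q : Set M.W) : Set M.W :=
  {s | ∀ t, M.sim i s t → t ∈ Q}

/-- The action `a` is executable at all members of the `i`-class of `s`. -/
def Executable (a : M.Act i) (s : M.W) : Prop :=
  ∀ t, M.sim i s t → ∃ u, M.R i a t u

/-- The operator adding to the states where `i` knows `Q` those from which some executable action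
leads only to `X`. Its least fixed point is `Model.attractor`. -/
def attractorStep (Q : Set M.W) : Set M.W →o Set M.W where
  toFun X := M.knows i Q ∪ {s | ∃ a, M.Executable i a s ∧ ∀ t, M.ctrans i a s t → t ∈ X}
  monotone' _ _ h := Set.union_subset_union_right _ fun _ ⟨a, ha, hX⟩ =>
    ⟨a, ha, fun t ht => h (hX t ht)⟩

/-- The attractor of `Q` in the sense of reachability games: the states from which agent `i` can
force reaching an `i`-class included in `Q`. -/
def attractor (Q : Set M.W) : Set M.W :=
  (M.attractorStep i Q).lfp

variable {M i}

theorem sim_congr_left {s t : M.W} (h : M.sim i s t) (u : M.W) : M.sim i s u ↔ M.sim i t u :=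
  ⟨(M.equiv i).trans ((M.equiv i).symm h), (M.equiv i).trans h⟩

theorem ctrans_congr_left {a : M.Act i} {s t : M.W} (h : M.sim i s t) (u : M.W) :
    M.ctrans i a s u ↔ M.ctrans i a t u := by
  simp only [ctrans, sim_congr_left h]

theorem executable_congr {a : M.Act i} {s t : M.W} (h : M.sim i s t) :
    M.Executable i a s ↔ M.Executable i a t := by
  simp only [Executable, sim_congr_left h]

theorem mem_attractorStep_congr {Q : Set M.W} {s t : M.W} (h : M.sim i s t) (X : Set M.W) :
    s ∈ M.attractorStep i Q X ↔ t ∈ M.attractorStep i Q X := by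
  simp only [attractorStep, OrderHom.coe_mk, knows, Set.mem_union, Set.mem_ofPred_eq,
    sim_congr_left h, executable_congr h, ctrans_congr_left h]

theorem mem_attractor_congr {Q : Set M.W} {s t : M.W} (h : M.sim i s t) :
    s ∈ M.attractor i Q ↔ t ∈ M.attractor i Q := by
  rw [attractor, ← OrderHom.map_lfp]
  exact mem_attractorStep_congr h _

theorem Executable.exists_ctrans {a : M.Act i} {s : M.W} (h : M.Executable i a s) :
    ∃ t, M.ctrans i a s t := by
  obtain ⟨u, hu⟩ := h s ((M.equiv i).refl s)
  exact ⟨u, s, u, (M.equiv i).refl s, (M.equiv i).refl u, hu⟩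

theorem knows_subset_attractor (Q : Set M.W) : M.knows i Q ⊆ M.attractor i Q :=
  fun _ hs => (M.attractorStep i Q).map_lfp.le (.inl hs)

theorem Executable.mem_attractor {Q : Set M.W} {a : M.Act i} {s : M.W} (ha : M.Executable i a s)
    (h : ∀ t, M.ctrans i a s t → t ∈ M.attractor i Q) : s ∈ M.attractor i Q :=
  (M.attractorStep i Q).map_lfp.le (.inr ⟨a, ha, h⟩)

theorem attractor_subset {Q X : Set M.W} (hQ : M.knows i Q ⊆ X)
    (hX : ∀ a s, M.Executable i a s → (∀ t, M.ctrans i a s t → t ∈ X) → s ∈ X) :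
    M.attractor i Q ⊆ X :=
  (M.attractorStep i Q).lfp_le <| Set.union_subset hQ fun s ⟨a, ha, h⟩ => hX a s ha h

theorem attractor_subset_attractor {Q Q' : Set M.W} (h : M.knows i Q ⊆ M.attractor i Q') :
    M.attractor i Q ⊆ M.attractor i Q' :=
  attractor_subset h fun _ _ => Executable.mem_attractor

theorem knows_nonempty_of_attractor {Q : Set M.W} (h : (M.attractor i Q).Nonempty) :
    (M.knows i Q).Nonempty := by
  contrapose! h
  refine Set.subset_empty_iff.1 (attractor_subset h.subset fun a s ha hs => ?_)
  obtain ⟨t, ht⟩ := ha.exists_ctrans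
  exact hs t ht

/-- Executing `a` keeps agent `i` in the attractor of `Q` and decreases the rank. -/
def Progress (M : Model P I) (i : I) (Q : Set M.W) (s : M.W) (a : M.Act i) : Prop :=
  M.Executable i a s ∧ ∀ t, M.ctrans i a s t →
    t ∈ M.attractor i Q ∧ lfpRank (M.attractorStep i Q) t < lfpRank (M.attractorStep i Q) s

theorem Progress.congr {Q : Set M.W} {s t : M.W} (h : M.sim i s t) :
    M.Progress i Q s = M.Progress i Q t := by
  funext a
  simp only [Progress, executable_congr h, ctrans_congr_left h,
    lfpRank_congr (mem_attractorStep_congr h)]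

theorem exists_progress {Q : Set M.W} {s : M.W} (hs : s ∈ M.attractor i Q)
    (hQ : s ∉ M.knows i Q) : ∃ a, M.Progress i Q s a :=
  (mem_apply_lfpRank_lt hs).resolve_left hQ

end Model

namespace Strategy

open Relation

variable {M : Model P I} {i : I} {σ : Strategy M i}

/-- A step `[s]ⁱ → [t]ⁱ` of an execution of `σ`. -/
def Next (σ : Strategy M i) (s t : M.W) : Prop :=
  ∃ a, σ.act s = some a ∧ M.ctrans i a s t

/-- All executions of `σ` from `s` are finite and end in classes included in `Q`. -/
def Forces (σ : Strategy M i) (Q : Set M.W) (s : M.W) : Prop :=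
  Acc (Function.swap σ.Next) s ∧ ∀ t, ReflTransGen σ.Next s t → σ.act t = none → t ∈ M.knows i Q

theorem reflTransGen_next_iff {s t : M.W} :
    ReflTransGen σ.Next s t ↔ ∃ δ h, δ 0 = s ∧ δ h = t ∧ σ.FinExec δ h := by
  constructor
  · intro hst
    induction hst using ReflTransGen.head_induction_on with
    | refl => exact ⟨fun _ => t, 0, rfl, rfl, fun k hk => absurd hk k.not_lt_zero⟩
    | @head s u hsu _ ih =>
      obtain ⟨δ, h, rfl, rfl, hδ⟩ := ih
      refine ⟨fun n => n.casesOn s δ, h + 1, rfl, rfl, ?_⟩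
      rintro (_ | n) hn
      · exact hsu
      · exact hδ n (Nat.lt_of_succ_lt_succ hn)
  · rintro ⟨δ, h, rfl, rfl, hδ⟩
    induction h with
    | zero => exact .refl
    | succ h ih => exact (ih fun k hk => hδ k (hk.trans h.lt_succ_self)).tail (hδ h h.lt_succ_self)

theorem acc_next_iff {s : M.W} :
    Acc (Function.swap σ.Next) s ↔ ∀ δ, δ 0 = s → ¬ σ.InfExec δ := by
  rw [← not_iff_not, not_acc_iff_exists_descending_chain]
  simp only [not_forall, not_not, exists_prop]
  rfl

theorem Forces.mem_attractor {Q : Set M.W} {s : M.W} (h : σ.Forces Q s) : s ∈ M.attractor i Q := by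
  obtain ⟨hacc, hend⟩ := h
  induction hacc with
  | intro s _ ih =>
    cases ha : σ.act s with
    | none => exact M.knows_subset_attractor Q (hend s .refl ha)
    | some a =>
      exact Model.Executable.mem_attractor (σ.exec s a ha) fun t ht =>
        ih t ⟨a, ha, ht⟩ fun u hu => hend u (hu.head ⟨a, ha, ht⟩)

open Classical in
/-- The strategy that chooses an action making progress towards `Q` whenever there is one. -/
noncomputable def progress (M : Model P I) (i : I) (Q : Set M.W) : Strategy M i where
  act s := if h : ∃ a, M.Progress i Q s a then some h.choose else none
  congr s t h := by rw [Model.Progress.congr h]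
  exec s a h := by
    obtain ⟨hex, h⟩ := Option.dite_none_right_eq_some.1 h
    exact Option.some.inj h ▸ hex.choose_spec.1

theorem progress_of_act_eq_some {Q : Set M.W} {s : M.W} {a : M.Act i}
    (h : (progress M i Q).act s = some a) : M.Progress i Q s a := by
  obtain ⟨hex, h⟩ := Option.dite_none_right_eq_some.1 h
  exact Option.some.inj h ▸ hex.choose_spec

theorem progress_act_eq_none_iff {Q : Set M.W} {s : M.W} :
    (progress M i Q).act s = none ↔ ¬ ∃ a, M.Progress i Q s a := by
  simp [progress]

theorem progress_forces {Q : Set M.W} {s : M.W} (hs : s ∈ M.attractor i Q) :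
    (progress M i Q).Forces Q s := by
  have hnext {t u : M.W} (h : (progress M i Q).Next t u) : u ∈ M.attractor i Q ∧
      lfpRank (M.attractorStep i Q) u < lfpRank (M.attractorStep i Q) t := by
    obtain ⟨a, ha, htu⟩ := h
    exact (progress_of_act_eq_some ha).2 u htu
  refine ⟨Subrelation.accessible (fun h => (hnext h).2)
    (InvImage.accessible _ (wellFounded_lt.apply _)), fun t ht hnone => ?_⟩
  have htQ : t ∈ M.attractor i Q := by
    obtain rfl | ⟨u, -, hut⟩ := ht.cases_tail
    · exact hs
    · exact (hnext hut).1
  by_contra hne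
  exact progress_act_eq_none_iff.1 hnone (Model.exists_progress htQ hne)

end Strategy

theorem sat_kh_iff_exists_forces {M : Model P I} {i : I} {s : M.W} {φ : Formula P I} :
    Sat M s (.kh i φ) ↔ ∃ σ : Strategy M i, ∀ t, M.sim i s t → σ.Forces {u | Sat M u φ} t := by
  refine exists_congr fun σ => ⟨fun ⟨hinf, hend⟩ t ht => ⟨?_, fun u hu hnone => ?_⟩,
    fun h => ⟨fun δ hδ => ?_, fun δ k hδ hk => ?_⟩⟩
  · exact Strategy.acc_next_iff.2 fun δ h0 => hinf δ (h0 ▸ ht)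
  · obtain ⟨δ, k, rfl, rfl, hδ⟩ := Strategy.reflTransGen_next_iff.1 hu
    exact hend δ k ht ⟨hδ, hnone⟩
  · exact Strategy.acc_next_iff.1 (h _ hδ).1 δ rfl
  · exact (h _ hδ).2 _ (Strategy.reflTransGen_next_iff.2 ⟨δ, k, rfl, rfl, hk.1⟩) hk.2

theorem sat_kh_iff_mem_attractor {M : Model P I} {i : I} {s : M.W} {φ : Formula P I} :
    Sat M s (.kh i φ) ↔ s ∈ M.attractor i {t | Sat M t φ} := by
  rw [sat_kh_iff_exists_forces]
  exact ⟨fun ⟨_, hσ⟩ => (hσ s ((M.equiv i).refl s)).mem_attractor, fun hs =>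
    ⟨_, fun _ ht => Strategy.progress_forces ((Model.mem_attractor_congr ht).1 hs)⟩⟩

/-! ### Expansions -/

/-- The alternative sets of formulas that the expansion rules (a)–(g) derive from a formula: a label
containing the formula is closed under its rule iff it includes one of the alternatives. Formulas
without a rule have the single alternative `∅`. -/
def expansions : Formula P I → Set (Set (Formula P I))
  | .neg (.neg ψ) => {{ψ}}
  | .and ψ χ => {{ψ, χ}}
  | .neg (.and ψ χ) => {{.neg ψ, .neg χ}, {.neg ψ, χ}, {ψ, .neg χ}}
  | .know _ ψ => {{ψ}}
  | .neg (.know _ ψ) => {{.neg ψ}, {ψ}}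
  | .kh i ψ => {{.neg (.know i ψ)}, {.know i ψ}}
  | .neg (.kh i ψ) => {{.neg (.know i ψ)}}
  | _ => {∅}

theorem autoChecked_iff {Γ : Set (Formula P I)} {φ : Formula P I} :
    AutoChecked Γ φ ↔ ∃ Δ ∈ expansions φ, Δ ⊆ Γ := by
  fun_cases expansions φ <;> simp_all [AutoChecked, Set.insert_subset_iff]

theorem orOut_eq_image {Γ : Set (Formula P I)} {φ : Formula P I} (h : ¬ AutoChecked Γ φ) :
    orOut Γ φ = (· ∪ Γ) '' expansions φ := by
  fun_cases expansions φ <;>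
    simp_all [AutoChecked, orOut, Set.insert_union, Set.image_insert_eq]

theorem expansions_nonempty (φ : Formula P I) : (expansions φ).Nonempty := by
  fun_cases expansions φ <;> simp

theorem finite_of_mem_expansions {φ : Formula P I} {Δ : Set (Formula P I)}
    (h : Δ ∈ expansions φ) : Δ.Finite := by
  revert h
  fun_cases expansions φ <;> simp +contextual [or_imp]

theorem exists_sat_expansion {M : Model P I} {s : M.W} {φ : Formula P I} (h : Sat M s φ) :
    ∃ Δ ∈ expansions φ, ∀ χ ∈ Δ, Sat M s χ := by
  fun_cases expansions φ with
  | case1 ψ => simpa [Sat] using h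
  | case2 ψ χ => simpa [Sat] using h
  | case3 ψ χ =>
    by_cases hψ : Sat M s ψ <;> by_cases hχ : Sat M s χ <;> simp_all [Sat]
  | case4 i ψ => simpa using h s ((M.equiv i).refl s)
  | case5 i ψ => simpa [Sat] using (em (Sat M s ψ)).symm
  | case6 i ψ => simpa [Sat] using (em (Sat M s (.know i ψ))).symm
  | case7 i ψ =>
    have hk : ¬ Sat M s (.know i ψ) := fun hk =>
      h (sat_kh_iff_mem_attractor.2 (M.knows_subset_attractor _ hk))
    simpa [Sat] using hk
  | case8 => simp

/-- A set of formulas is expansion closed if it contains all formulas that the expansion rules can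
derive from its members. -/
def ExpansionClosed (D : Set (Formula P I)) : Prop :=
  ∀ φ ∈ D, ∀ Δ ∈ expansions φ, Δ ⊆ D

/-- The formulas that the expansion rules derive, up to negation, from a formula. -/
def components : Formula P I → Set (Formula P I)
  | .bot => ∅
  | .atom _ => ∅
  | .neg ψ => {ψ}
  | .and ψ χ => {ψ, χ}
  | .know _ ψ => {ψ}
  | .kh i ψ => {.know i ψ}

/-- The set `C` contains the components of its members. -/
def ComponentClosed (C : Set (Formula P I)) : Prop :=
  ∀ φ ∈ C, components φ ⊆ C

/-- The members of `C` and their negations. -/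
def withNeg (C : Set (Formula P I)) : Set (Formula P I) :=
  C ∪ Formula.neg '' C

theorem neg_mem_withNeg {C : Set (Formula P I)} {ψ : Formula P I} (h : ψ ∈ C) :
    .neg ψ ∈ withNeg C :=
  .inr ⟨ψ, h, rfl⟩

theorem ComponentClosed.components_subset {C : Set (Formula P I)} (hC : ComponentClosed C)
    {φ : Formula P I} (h : φ ∈ withNeg C) : components φ ⊆ C := by
  obtain h | ⟨ψ, hψ, rfl⟩ := h
  · exact hC φ h
  · exact Set.singleton_subset_iff.2 hψ

theorem ComponentClosed.expansionClosed_withNeg {C : Set (Formula P I)} (hC : ComponentClosed C) :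
    ExpansionClosed (withNeg C) := by
  have hpos {ψ : Formula P I} (h : ψ ∈ C) : ψ ∈ withNeg C := .inl h
  intro φ hφ
  have hφC := hC.components_subset hφ
  fun_cases expansions φ
  case case1 | case3 | case5 | case7 =>
    have hψC := hC _ (hφC rfl)
    simp_all [components, Set.insert_subset_iff, neg_mem_withNeg]
  all_goals simp_all [components, Set.insert_subset_iff, neg_mem_withNeg]

theorem ComponentClosed.insert {C : Set (Formula P I)} (hC : ComponentClosed C) {φ : Formula P I}
    (hφ : components φ ⊆ C) : ComponentClosed (insert φ C) := by
  rintro ψ (rfl | hψ)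
  · exact hφ.trans (Set.subset_insert _ _)
  · exact (hC ψ hψ).trans (Set.subset_insert _ _)

theorem ComponentClosed.sUnion {𝒞 : Set (Set (Formula P I))} (h : ∀ C ∈ 𝒞, ComponentClosed C) :
    ComponentClosed (⋃₀ 𝒞) := fun φ ⟨C, hC, hφ⟩ =>
  (h C hC φ hφ).trans (Set.subset_sUnion_of_mem hC)

theorem exists_finite_componentClosed_mem (φ : Formula P I) :
    ∃ C : Set (Formula P I), C.Finite ∧ ComponentClosed C ∧ φ ∈ C := by
  induction φ with
  | bot | atom p =>
    exact ⟨_, Set.finite_singleton _, by simp [ComponentClosed, components], rfl⟩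
  | neg φ ih | know i φ ih =>
    obtain ⟨C, hfin, hC, hφ⟩ := ih
    exact ⟨_, hfin.insert _, hC.insert (by simpa [components] using hφ), Set.mem_insert _ _⟩
  | kh i φ ih =>
    obtain ⟨C, hfin, hC, hφ⟩ := ih
    refine ⟨_, (hfin.insert _).insert _, ComponentClosed.insert (hC.insert (φ := .know i φ) ?_) ?_,
      Set.mem_insert _ _⟩ <;> simp [components, hφ]
  | and φ χ ihφ ihχ =>
    obtain ⟨C, hCfin, hC, hφ⟩ := ihφ
    obtain ⟨D, hDfin, hD, hχ⟩ := ihχ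
    refine ⟨_, (hCfin.union hDfin).insert _, ComponentClosed.insert ?_ ?_, Set.mem_insert _ _⟩
    · rw [← Set.sUnion_pair]
      exact .sUnion (by simp [hC, hD])
    · simp [components, Set.insert_subset_iff, hφ, hχ]

theorem exists_finite_expansionClosed {Γ : Set (Formula P I)} (hΓ : Γ.Finite) :
    ∃ D : Set (Formula P I), D.Finite ∧ ExpansionClosed D ∧ Γ ⊆ D := by
  choose C hfin hC hmem using exists_finite_componentClosed_mem (P := P) (I := I)
  have hClosed : ComponentClosed (⋃₀ (C '' Γ)) := .sUnion (by simp [hC])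
  have hFin : (⋃₀ (C '' Γ)).Finite := (hΓ.image C).sUnion (by simp [hfin])
  exact ⟨withNeg (⋃₀ (C '' Γ)), hFin.union (hFin.image _), hClosed.expansionClosed_withNeg,
    fun φ hφ => .inl ⟨C φ, ⟨φ, hφ, rfl⟩, hmem φ⟩⟩

/-- The formulas decided by `Γ`. -/
def decided (Γ : Set (Formula P I)) : Set (Formula P I) :=
  {φ | φ ∈ Γ ∨ .neg φ ∈ Γ}

theorem Saturated.componentClosed_decided {Γ : Set (Formula P I)} (h : Saturated Γ) :
    ComponentClosed (decided Γ) := by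
  rintro φ (hφ | hφ) <;> have hc := h _ hφ <;>
    rcases φ with _ | p | φ | ⟨ψ, χ⟩ | ⟨i, ψ⟩ | ⟨i, ψ⟩ <;>
    simp only [AutoChecked, components, Set.insert_subset_iff, Set.singleton_subset_iff,
      Set.empty_subset, decided, Set.mem_ofPred_eq] at hc ⊢ <;>
    tauto

/-! ### Soundness -/

/-- The formulas `Kᵢψ`, `¬Kᵢψ`, `Khᵢψ`, `¬Khᵢψ`, whose truth value is constant on `∼ᵢ`-classes. -/
inductive IsAgentFormula (i : I) : Formula P I → Prop
  | know (ψ) : IsAgentFormula i (.know i ψ)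
  | neg_know (ψ) : IsAgentFormula i (.neg (.know i ψ))
  | kh (ψ) : IsAgentFormula i (.kh i ψ)
  | neg_kh (ψ) : IsAgentFormula i (.neg (.kh i ψ))

/-- The part of a label that agent `i` carries over to all `∼ᵢ`-related labels. -/
def agentPart (i : I) (Γ : Set (Formula P I)) : Set (Formula P I) :=
  {φ ∈ Γ | IsAgentFormula i φ}

theorem isAgentFormula_iff {i : I} {φ : Formula P I} :
    IsAgentFormula i φ ↔ (∃ χ, φ = .know i χ) ∨ (∃ χ, φ = .neg (.know i χ)) ∨
      (∃ χ, φ = .kh i χ) ∨ (∃ χ, φ = .neg (.kh i χ)) := by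
  constructor
  · rintro (χ | χ | χ | χ) <;> simp
  · rintro (⟨χ, rfl⟩ | ⟨χ, rfl⟩ | ⟨χ, rfl⟩ | ⟨χ, rfl⟩) <;> constructor

theorem sigmaSet_eq_insert (Γ : Set (Formula P I)) (i : I) (ψ : Formula P I) :
    SigmaSet Γ i ψ = insert (.neg ψ) (agentPart i Γ) := by
  simp only [SigmaSet, agentPart, isAgentFormula_iff]

theorem IsAgentFormula.sat_congr {i : I} {φ : Formula P I} (hφ : IsAgentFormula i φ)
    {M : Model P I} {s t : M.W} (h : M.sim i s t) : Sat M s φ ↔ Sat M t φ := by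
  cases hφ with
  | know ψ => simp only [Sat, Model.sim_congr_left h]
  | neg_know ψ => simp only [Sat, Model.sim_congr_left h]
  | kh ψ => rw [sat_kh_iff_mem_attractor, sat_kh_iff_mem_attractor, Model.mem_attractor_congr h]
  | neg_kh ψ =>
    rw [Sat, Sat, sat_kh_iff_mem_attractor, sat_kh_iff_mem_attractor, Model.mem_attractor_congr h]

/-- Some state of some model satisfies all members of `Γ`. -/
def Satisfiable (Γ : Set (Formula P I)) : Prop :=
  ∃ (M : Model P I) (s : M.W), ∀ φ ∈ Γ, Sat M s φ

namespace Satisfiable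

variable {Γ : Set (Formula P I)} {i : I} {φ ψ χ : Formula P I}

theorem not_blatant (h : Satisfiable Γ) : ¬ Blatant Γ := by
  obtain ⟨_, _, hs⟩ := h
  rintro (hbot | ⟨ψ, hψ, hn⟩)
  · exact hs _ hbot
  · exact hs _ hn (hs _ hψ)

theorem exists_mem_orOut (h : Satisfiable Γ) (hφ : φ ∈ Γ) (hc : ¬ AutoChecked Γ φ) :
    ∃ Δ ∈ orOut Γ φ, Satisfiable Δ := by
  obtain ⟨M, s, hs⟩ := h
  obtain ⟨Δ, hΔ, hsΔ⟩ := exists_sat_expansion (hs φ hφ)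
  rw [orOut_eq_image hc]
  exact ⟨Δ ∪ Γ, ⟨Δ, hΔ, rfl⟩, M, s, fun χ hχ => hχ.elim (hsΔ χ) (hs χ)⟩

theorem sigmaSet (h : Satisfiable Γ) (hψ : .neg (.know i ψ) ∈ Γ) :
    Satisfiable (SigmaSet Γ i ψ) := by
  obtain ⟨M, s, hs⟩ := h
  obtain ⟨t, hst, ht⟩ : ∃ t, M.sim i s t ∧ ¬ Sat M t ψ := by simpa [Sat] using hs _ hψ
  rw [sigmaSet_eq_insert]
  refine ⟨M, t, ?_⟩
  rintro φ (rfl | ⟨hφ, hi⟩)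
  · exact ht
  · exact (hi.sat_congr hst).1 (hs φ hφ)

theorem know_of_kh (h : Satisfiable Γ) (hψ : .kh i ψ ∈ Γ) : Satisfiable {.know i ψ} := by
  obtain ⟨M, s, hs⟩ := h
  obtain ⟨t, ht⟩ := Model.knows_nonempty_of_attractor ⟨s, sat_kh_iff_mem_attractor.1 (hs _ hψ)⟩
  exact ⟨M, t, fun φ hφ => hφ ▸ ht⟩

theorem know_neg_kh (h : Satisfiable Γ) (hψ : .kh i ψ ∈ Γ) (hχ : .neg (.kh i χ) ∈ Γ) :
    Satisfiable {.know i ψ, .neg (.kh i χ)} := by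
  obtain ⟨M, s, hs⟩ := h
  obtain ⟨t, ht, htχ⟩ : ∃ t ∈ M.knows i {u | Sat M u ψ}, t ∉ M.attractor i {u | Sat M u χ} := by
    by_contra! hsub
    exact hs _ hχ (sat_kh_iff_mem_attractor.2
      (Model.attractor_subset_attractor hsub (sat_kh_iff_mem_attractor.1 (hs _ hψ))))
  refine ⟨M, t, ?_⟩
  rintro φ (rfl | rfl)
  · exact ht
  · exact fun hk => htχ (sat_kh_iff_mem_attractor.1 hk)

end Satisfiable

variable {T}

namespace IsTableau

variable {φ0 : Formula P I} {n m : T.Node}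

theorem blockedBy_eq_none (hT : IsTableau φ0 T) (h : T.parent m = some n) :
    T.blockedBy n = none := by
  by_contra hb
  exact hT.blocked_leaf n hb m h

theorem not_blatant (hT : IsTableau φ0 T) (h : T.parent m = some n) : ¬ Blatant (T.label n) :=
  fun hb => hT.blatant_leaf n hb m h

theorem orNodeCond (hT : IsTableau φ0 T) (h : T.parent m = some n)
    (hsat : ¬ Saturated (T.label n)) : OrNodeCond T n :=
  hT.or_node n (hT.not_blatant h) (hT.blockedBy_eq_none h) hsat

theorem andNodeCond (hT : IsTableau φ0 T) (h : T.parent m = some n)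
    (hsat : Saturated (T.label n)) : AndNodeCond T n :=
  hT.and_node n (hT.not_blatant h) (hT.blockedBy_eq_none h) hsat

theorem satisfiable_child (hT : IsTableau φ0 T) (h : T.parent m = some n)
    (hsat : Saturated (T.label n)) (hn : Satisfiable (T.label n)) : Satisfiable (T.label m) := by
  obtain ⟨i, ψ, -, hψ, hl, -⟩ | ⟨i, ψ, -, hψ, -, hl⟩ | ⟨i, ψ, χ, -, hχ, hψ, -, hl⟩ :=
    (hT.andNodeCond h hsat).2.2.2 m h
  · exact hl ▸ hn.sigmaSet hψ
  · exact hl ▸ hn.know_of_kh hψ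
  · exact hl ▸ hn.know_neg_kh hψ hχ

theorem exists_satisfiable_child (hT : IsTableau φ0 T) (hleaf : ¬ IsLeaf T n)
    (hsat : ¬ Saturated (T.label n)) (hn : Satisfiable (T.label n)) :
    ∃ m ∈ Children T n, Satisfiable (T.label m) := by
  obtain ⟨k, hk⟩ : ∃ k, T.parent k = some n := by simpa [IsLeaf] using hleaf
  obtain ⟨φ, hφ, hc, hex, -⟩ := hT.orNodeCond hk hsat
  obtain ⟨Δ, hΔ, hsΔ⟩ := hn.exists_mem_orOut hφ hc
  obtain ⟨m, hm, -, rfl, -⟩ := hex Δ hΔ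
  exact ⟨m, hm, hsΔ⟩

end IsTableau

/-- The nodes such that all labels on the branch from the root to them are satisfiable. -/
def satisfiableBranch (T : LTree P I) : Set T.Node :=
  {n | ∀ m, Relation.ReflTransGen (fun a b => T.parent b = some a) m n → Satisfiable (T.label m)}

theorem mem_satisfiableBranch_iff {n : T.Node} : n ∈ satisfiableBranch T ↔
    Satisfiable (T.label n) ∧ ∀ m, T.parent n = some m → m ∈ satisfiableBranch T := by
  refine ⟨fun h => ⟨h n .refl, fun m hm k hk => h k (hk.tail hm)⟩, fun ⟨hn, hpar⟩ k hk => ?_⟩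
  obtain rfl | ⟨m, hkm, hm⟩ := hk.cases_tail
  · exact hn
  · exact hpar m hm k hkm

theorem child_mem_satisfiableBranch {n m : T.Node} (hn : n ∈ satisfiableBranch T)
    (h : T.parent m = some n) (hm : Satisfiable (T.label m)) : m ∈ satisfiableBranch T :=
  mem_satisfiableBranch_iff.2 ⟨hm, fun _ hk => Option.some.inj (h.symm.trans hk) ▸ hn⟩

theorem IsTableau.completeSubtree_satisfiableBranch {φ0 : Formula P I} (hT : IsTableau φ0 T)
    (hroot : Satisfiable (T.label T.root)) : CompleteSubtree T (satisfiableBranch T) := by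
  refine ⟨⟨mem_satisfiableBranch_iff.2 ⟨hroot, by simp [T.parent_root]⟩,
    fun n hn => (mem_satisfiableBranch_iff.1 hn).2⟩, fun n hn _ hsat m hm => ?_,
    fun n hn hleaf hsat => ?_⟩
  · exact child_mem_satisfiableBranch hn hm
      (hT.satisfiable_child hm hsat (mem_satisfiableBranch_iff.1 hn).1)
  · obtain ⟨m, hm, hms⟩ :=
      hT.exists_satisfiable_child hleaf hsat (mem_satisfiableBranch_iff.1 hn).1
    exact ⟨m, hm, child_mem_satisfiableBranch hn hm hms⟩

theorem IsTableau.not_tableauClosed_of_sat {φ0 : Formula P I} (hT : IsTableau φ0 T)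
    {M : Model P I} {s : M.W} (hs : Sat M s φ0) : ¬ TableauClosed T := by
  have hroot : Satisfiable (T.label T.root) := by
    rw [hT.root_label]
    exact ⟨M, s, fun φ hφ => hφ ▸ hs⟩
  intro hclosed
  obtain ⟨n, hn, hb⟩ := hclosed _ (hT.completeSubtree_satisfiableBranch hroot)
  exact (mem_satisfiableBranch_iff.1 hn).1.not_blatant hb

/-! ### Completeness -/

theorem ssubset_of_mem_orOut {Γ Δ : Set (Formula P I)} {φ : Formula P I}
    (hc : ¬ AutoChecked Γ φ) (hΔ : Δ ∈ orOut Γ φ) : Γ ⊂ Δ := by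
  rw [orOut_eq_image hc] at hΔ
  obtain ⟨Δ, hΔ, rfl⟩ := hΔ
  refine Set.subset_union_right.ssubset_of_ne fun h => hc (autoChecked_iff.2 ⟨Δ, hΔ, ?_⟩)
  exact Set.union_eq_right.1 h.symm

theorem ExpansionClosed.subset_of_mem_orOut {D Γ Δ : Set (Formula P I)} {φ : Formula P I}
    (hD : ExpansionClosed D) (hΓ : Γ ⊆ D) (hφ : φ ∈ Γ) (hc : ¬ AutoChecked Γ φ)
    (hΔ : Δ ∈ orOut Γ φ) : Δ ⊆ D := by
  rw [orOut_eq_image hc] at hΔ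
  obtain ⟨Δ, hΔ, rfl⟩ := hΔ
  exact Set.union_subset (hD φ (hΓ hφ) Δ hΔ) hΓ

theorem ExpansionClosed.inter {C D : Set (Formula P I)} (hC : ExpansionClosed C)
    (hD : ExpansionClosed D) : ExpansionClosed (C ∩ D) := fun φ hφ Δ hΔ =>
  Set.subset_inter (hC φ hφ.1 Δ hΔ) (hD φ hφ.2 Δ hΔ)

theorem LTree.induction_on_parent {p : T.Node → Prop} (n : T.Node) (root : p T.root)
    (child : ∀ n m, T.parent n = some m → p m → p n) : p n := by
  induction hd : T.depth n using Nat.strong_induction_on generalizing n with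
  | _ d ih =>
    cases hn : T.parent n with
    | none => exact T.eq_root n hn ▸ root
    | some m => exact child n m hn (ih _ (by have := T.depth_parent n m hn; omega) m rfl)

theorem IsSubtree.ancestor_mem {S : Set T.Node} (hS : IsSubtree T S) {m n : T.Node}
    (h : Ancestor T m n) (hn : n ∈ S) : m ∈ S := by
  induction h with
  | single h => exact hS.2 _ hn _ h
  | tail _ h ih => exact ih (hS.2 _ hn _ h)

theorem IAnc.ancestor {i : I} {m n : T.Node} (h : IAnc T i m n) : Ancestor T m n := by
  induction h with
  | single hp _ => exact .single hp
  | cons hp _ _ ih => exact ih.tail hp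

theorem CompleteSubtree.child_mem {S : Set T.Node} (hS : CompleteSubtree T S) {n m : T.Node}
    (hn : n ∈ S) (hsat : Saturated (T.label n)) (h : T.parent m = some n) : m ∈ S :=
  hS.2.1 n hn (fun hleaf => hleaf m h) hsat m h

/-- The saturated labels of the unblocked nodes in `S`. For an open complete subtree these are the
states of a model. -/
def saturatedLabels (S : Set T.Node) : Set (Set (Formula P I)) :=
  {Γ | ∃ n ∈ S, T.blockedBy n = none ∧ Saturated (T.label n) ∧ T.label n = Γ}

namespace IsTableau

variable {φ0 : Formula P I} {S : Set T.Node}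

theorem finite_label (hT : IsTableau φ0 T) (n : T.Node) : (T.label n).Finite := by
  induction n using LTree.induction_on_parent with
  | root => simp [hT.root_label]
  | child m n h ih =>
    by_cases hsat : Saturated (T.label n)
    · obtain ⟨i, ψ, -, -, hl, -⟩ | ⟨i, ψ, -, -, -, hl⟩ | ⟨i, ψ, χ, -, -, -, -, hl⟩ :=
        (hT.andNodeCond h hsat).2.2.2 m h
      · exact hl ▸ (ih.subset (Set.sep_subset _ _)).insert _
      · simp [hl]
      · simp [hl]
    · obtain ⟨φ, -, hc, -, hch⟩ := hT.orNodeCond h hsat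
      have hl := (hch m h).2.1
      rw [orOut_eq_image hc] at hl
      obtain ⟨Δ, hΔ, hl⟩ := hl
      exact hl ▸ (finite_of_mem_expansions hΔ).union ih

theorem exists_unblocked (hT : IsTableau φ0 T) (hS : IsSubtree T S) {m : T.Node} (hm : m ∈ S) :
    ∃ n ∈ S, T.blockedBy n = none ∧ T.label n = T.label m := by
  cases hb : T.blockedBy m with
  | none => exact ⟨m, hm, hb, rfl⟩
  | some n =>
    obtain ⟨hanc, hl⟩ := hT.blocked_spec m n hb
    obtain ⟨k, hk, -⟩ := Relation.TransGen.head'_iff.1 hanc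
    exact ⟨n, hS.ancestor_mem hanc hm, hT.blockedBy_eq_none hk, hl⟩

theorem exists_label_ssubset (hT : IsTableau φ0 T) (hS : CompleteSubtree T S)
    (hopen : ¬ ClosedSubtree T S) {m : T.Node} (hm : m ∈ S) (hb : T.blockedBy m = none)
    (hsat : ¬ Saturated (T.label m)) {D : Set (Formula P I)} (hD : ExpansionClosed D)
    (hmD : T.label m ⊆ D) :
    ∃ n ∈ S, T.blockedBy n = none ∧ T.label m ⊂ T.label n ∧ T.label n ⊆ D := by
  obtain ⟨φ, hφ, hc, hex, hch⟩ := hT.or_node m (fun h => hopen ⟨m, hm, h⟩) hb hsat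
  obtain ⟨Δ, hΔ⟩ := expansions_nonempty φ
  obtain ⟨k, hk, -⟩ := hex (Δ ∪ T.label m) (orOut_eq_image hc ▸ ⟨Δ, hΔ, rfl⟩)
  obtain ⟨n, hn, hnS⟩ := hS.2.2 m hm (fun hleaf => hleaf k hk) hsat
  obtain ⟨-, hl, hnb⟩ := hch n hn
  exact ⟨n, hnS, hnb, ssubset_of_mem_orOut hc hl, hD.subset_of_mem_orOut hmD hφ hc hl⟩

theorem exists_mem_saturatedLabels (hT : IsTableau φ0 T) (hS : CompleteSubtree T S)
    (hopen : ¬ ClosedSubtree T S) {m : T.Node} (hm : m ∈ S) {D : Set (Formula P I)}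
    (hD : ExpansionClosed D) (hmD : T.label m ⊆ D) :
    ∃ Γ ∈ saturatedLabels S, T.label m ⊆ Γ ∧ Γ ⊆ D := by
  obtain ⟨E, hEfin, hE, hmE⟩ := exists_finite_expansionClosed (hT.finite_label m)
  obtain ⟨m', hm', hb', hl'⟩ := hT.exists_unblocked hS.1 hm
  have hfin : {Γ | Γ ⊆ D ∩ E ∧ ∃ n ∈ S, T.blockedBy n = none ∧ T.label n = Γ}.Finite :=
    (hEfin.inter_of_right D).finite_subsets.subset fun _ h => h.1
  obtain ⟨_, hmΓ, ⟨⟨hnDE, n, hn, hb, rfl⟩, hmax⟩⟩ :=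
    hfin.exists_le_maximal ⟨Set.subset_inter hmD hmE, m', hm', hb', hl'⟩
  refine ⟨_, ⟨n, hn, hb, ?_, rfl⟩, hmΓ, hnDE.trans Set.inter_subset_left⟩
  by_contra hsat
  obtain ⟨k, hk, hkb, hnk, hkDE⟩ := hT.exists_label_ssubset hS hopen hn hb hsat (hD.inter hE) hnDE
  exact hnk.not_subset (hmax ⟨hkDE, k, hk, hkb, rfl⟩ hnk.subset)

end IsTableau

/-- A family of saturated labels with witnesses for all modal requirements. -/
structure HintikkaFamily (H : Set (Set (Formula P I))) : Prop where
  not_blatant : ∀ Γ ∈ H, ¬ Blatant Γ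
  saturated : ∀ Γ ∈ H, Saturated Γ
  neg_know : ∀ Γ ∈ H, ∀ i ψ, .neg (.know i ψ) ∈ Γ →
    ∃ Δ ∈ H, .neg ψ ∈ Δ ∧ agentPart i Γ = agentPart i Δ
  kh : ∀ Γ ∈ H, ∀ i ψ, .kh i ψ ∈ Γ → .neg (.know i ψ) ∈ Γ → ∃ Δ ∈ H, .know i ψ ∈ Δ
  neg_kh : ∀ Γ ∈ H, ∀ i ψ χ, .neg (.kh i χ) ∈ Γ → .kh i ψ ∈ Γ → .neg (.know i ψ) ∈ Γ →
    ∃ Δ ∈ H, .know i ψ ∈ Δ ∧ .neg (.kh i χ) ∈ Δ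

theorem agentPart_subset_of_subset {Γ Δ : Set (Formula P I)} {i : I} (hΓ : Saturated Γ)
    (hΔ : ¬ Blatant Δ) (h : agentPart i Γ ⊆ Δ) (hdec : Δ ⊆ withNeg (decided Γ)) :
    agentPart i Δ ⊆ agentPart i Γ := by
  have mem_of_pair {ψ : Formula P I} (hi : IsAgentFormula i ψ) (hin : IsAgentFormula i (.neg ψ)) :
      (ψ ∈ Δ → ψ ∈ Γ) ∧ (.neg ψ ∈ Δ → .neg ψ ∈ Γ) := by
    have hdecided (hψ : ψ ∈ Δ ∨ .neg ψ ∈ Δ) : ψ ∈ decided Γ := by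
      obtain hψ | hψ := hψ
      · obtain h' | ⟨χ, -, rfl⟩ := hdec hψ
        · exact h'
        · cases hin
      · exact hΓ.componentClosed_decided.components_subset (hdec hψ) rfl
    exact ⟨fun hψ => (hdecided (.inl hψ)).resolve_right fun hn => hΔ (.inr ⟨ψ, hψ, h ⟨hn, hin⟩⟩),
      fun hn => (hdecided (.inr hn)).resolve_left fun hψ => hΔ (.inr ⟨ψ, h ⟨hψ, hi⟩, hn⟩)⟩
  rintro φ ⟨hφ, hi⟩
  refine ⟨?_, hi⟩
  cases hi with
  | know χ => exact (mem_of_pair (.know χ) (.neg_know χ)).1 hφ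
  | neg_know χ => exact (mem_of_pair (.know χ) (.neg_know χ)).2 hφ
  | kh χ => exact (mem_of_pair (.kh χ) (.neg_kh χ)).1 hφ
  | neg_kh χ => exact (mem_of_pair (.kh χ) (.neg_kh χ)).2 hφ

namespace IsTableau

variable {φ0 ψ : Formula P I} {S : Set T.Node} {n : T.Node} {i : I}

theorem exists_label_eq_sigmaSet (hT : IsTableau φ0 T) (hS : CompleteSubtree T S)
    (hopen : ¬ ClosedSubtree T S) (hn : n ∈ S) (hb : T.blockedBy n = none)
    (hsat : Saturated (T.label n)) (hψ : .neg (.know i ψ) ∈ T.label n) :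
    ∃ m ∈ S, T.label m = SigmaSet (T.label n) i ψ := by
  by_cases hanc : ∃ m, IAnc T i m n ∧ T.label m = SigmaSet (T.label n) i ψ
  · obtain ⟨m, hm, hl⟩ := hanc
    exact ⟨m, hS.1.ancestor_mem hm.ancestor hn, hl⟩
  · obtain ⟨m, hm, -, hl, -⟩ :=
      (hT.and_node n (fun h => hopen ⟨n, hn, h⟩) hb hsat).1 i ψ hψ hanc
    exact ⟨m, hS.child_mem hn hsat hm, hl⟩

theorem exists_neg_mem_agentPart_eq (hT : IsTableau φ0 T) (hS : CompleteSubtree T S)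
    (hopen : ¬ ClosedSubtree T S) (hn : n ∈ S) (hb : T.blockedBy n = none)
    (hsat : Saturated (T.label n)) (hψ : .neg (.know i ψ) ∈ T.label n) :
    ∃ Δ ∈ saturatedLabels S, .neg ψ ∈ Δ ∧ agentPart i (T.label n) = agentPart i Δ := by
  obtain ⟨m, hm, hl⟩ := hT.exists_label_eq_sigmaSet hS hopen hn hb hsat hψ
  rw [sigmaSet_eq_insert] at hl
  have hdec : T.label m ⊆ withNeg (decided (T.label n)) := by
    rw [hl]
    exact Set.insert_subset (neg_mem_withNeg (hsat _ hψ).symm) fun φ hφ => .inl (.inl hφ.1)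
  obtain ⟨_, ⟨k, hk, hkb, hks, rfl⟩, hmk, hkD⟩ :=
    hT.exists_mem_saturatedLabels hS hopen hm hsat.componentClosed_decided.expansionClosed_withNeg
      hdec
  rw [hl, Set.insert_subset_iff] at hmk
  exact ⟨_, ⟨k, hk, hkb, hks, rfl⟩, hmk.1, Set.Subset.antisymm (fun φ hφ => ⟨hmk.2 hφ, hφ.2⟩)
    (agentPart_subset_of_subset hsat (fun h => hopen ⟨k, hk, h⟩) hmk.2 hkD)⟩

theorem exists_mem_saturatedLabels_label_subset (hT : IsTableau φ0 T) (hS : CompleteSubtree T S)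
    (hopen : ¬ ClosedSubtree T S) (hn : n ∈ S) : ∃ Γ ∈ saturatedLabels S, T.label n ⊆ Γ := by
  obtain ⟨Γ, hΓ, hsub, -⟩ := hT.exists_mem_saturatedLabels hS hopen hn (D := Set.univ)
    (fun _ _ _ _ => Set.subset_univ _) (Set.subset_univ _)
  exact ⟨Γ, hΓ, hsub⟩

theorem hintikkaFamily_saturatedLabels (hT : IsTableau φ0 T) (hS : CompleteSubtree T S)
    (hopen : ¬ ClosedSubtree T S) : HintikkaFamily (saturatedLabels S) where
  not_blatant := by
    rintro _ ⟨n, hn, -, -, rfl⟩ hblat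
    exact hopen ⟨n, hn, hblat⟩
  saturated := by
    rintro _ ⟨n, -, -, hsat, rfl⟩
    exact hsat
  neg_know := by
    rintro _ ⟨n, hn, hb, hsat, rfl⟩ i ψ hψ
    exact hT.exists_neg_mem_agentPart_eq hS hopen hn hb hsat hψ
  kh := by
    rintro _ ⟨n, hn, hb, hsat, rfl⟩ i ψ hψ hk
    obtain ⟨m, hm, -, hl, -⟩ :=
      (hT.and_node n (fun h => hopen ⟨n, hn, h⟩) hb hsat).2.1 i ψ hψ hk
    simpa [hl] using
      hT.exists_mem_saturatedLabels_label_subset hS hopen (hS.child_mem hn hsat hm)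
  neg_kh := by
    rintro _ ⟨n, hn, hb, hsat, rfl⟩ i ψ χ hχ hψ hk
    obtain ⟨m, hm, -, hl, -⟩ :=
      (hT.and_node n (fun h => hopen ⟨n, hn, h⟩) hb hsat).2.2.1 i ψ χ hχ hψ hk
    simpa [hl, Set.insert_subset_iff] using
      hT.exists_mem_saturatedLabels_label_subset hS hopen (hS.child_mem hn hsat hm)

end IsTableau

/-- The model whose states are the members of a family of labels. Executing the action named by `ψ`
at a label with `Khᵢψ` and `¬Kᵢψ` may lead to any label with `Kᵢψ`. -/
def familyModel (H : Set (Set (Formula P I))) : Model P I where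
  W := H
  sim i Γ Δ := agentPart i Γ.1 = agentPart i Δ.1
  equiv _ := ⟨fun _ => rfl, Eq.symm, Eq.trans⟩
  Act _ := Formula P I
  R i ψ Γ Δ := .kh i ψ ∈ Γ.1 ∧ .neg (.know i ψ) ∈ Γ.1 ∧ .know i ψ ∈ Δ.1
  V Γ p := .atom p ∈ Γ.1

theorem IsAgentFormula.mem_congr {H : Set (Set (Formula P I))} {i : I} {φ : Formula P I}
    (hφ : IsAgentFormula i φ) {Γ Δ : (familyModel H).W} (h : (familyModel H).sim i Γ Δ) :
    φ ∈ Γ.1 ↔ φ ∈ Δ.1 := by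
  simpa [agentPart, hφ] using Set.ext_iff.1 (show agentPart i Γ.1 = agentPart i Δ.1 from h) φ

namespace HintikkaFamily

variable {H : Set (Set (Formula P I))} {i : I} {ψ : Formula P I} {Q : Set (familyModel H).W}
  {Γ : (familyModel H).W}

theorem mem_knows_of_know_mem (hH : HintikkaFamily H) (hQ : ∀ Δ, ψ ∈ Δ.1 → Δ ∈ Q)
    (h : .know i ψ ∈ Γ.1) : Γ ∈ (familyModel H).knows i Q := fun Δ hΔ =>
  hQ Δ (hH.saturated _ Δ.2 _ (((IsAgentFormula.know ψ).mem_congr hΔ).1 h))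

theorem notMem_knows_of_neg_know_mem (hH : HintikkaFamily H) (hQ : ∀ Δ, .neg ψ ∈ Δ.1 → Δ ∉ Q)
    (h : .neg (.know i ψ) ∈ Γ.1) : Γ ∉ (familyModel H).knows i Q := by
  obtain ⟨Δ, hΔ, hψ, hsim⟩ := hH.neg_know _ Γ.2 i ψ h
  exact fun hk => hQ ⟨Δ, hΔ⟩ hψ (hk ⟨Δ, hΔ⟩ hsim)

theorem executable (hH : HintikkaFamily H) (h : .kh i ψ ∈ Γ.1) (hn : .neg (.know i ψ) ∈ Γ.1) :
    (familyModel H).Executable i ψ Γ := fun Δ hΔ => by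
  have hΔkh := ((IsAgentFormula.kh ψ).mem_congr hΔ).1 h
  have hΔn := ((IsAgentFormula.neg_know ψ).mem_congr hΔ).1 hn
  obtain ⟨Θ, hΘ, hk⟩ := hH.kh _ Δ.2 i ψ hΔkh hΔn
  exact ⟨⟨Θ, hΘ⟩, hΔkh, hΔn, hk⟩

theorem mem_attractor_of_kh_mem (hH : HintikkaFamily H) (hQ : ∀ Δ, ψ ∈ Δ.1 → Δ ∈ Q)
    (h : .kh i ψ ∈ Γ.1) : Γ ∈ (familyModel H).attractor i Q := by
  have hknow {Δ : (familyModel H).W} (hk : .know i ψ ∈ Δ.1) : Δ ∈ (familyModel H).attractor i Q :=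
    Model.knows_subset_attractor Q (hH.mem_knows_of_know_mem hQ hk)
  obtain hn | hk := hH.saturated _ Γ.2 _ h
  · refine (hH.executable h hn).mem_attractor ?_
    rintro Δ ⟨_, Θ, -, hΔΘ, -, -, hk⟩
    exact hknow (((IsAgentFormula.know ψ).mem_congr hΔΘ).2 hk)
  · exact hknow hk

theorem notMem_attractor_of_neg_kh_mem (hH : HintikkaFamily H) (hQ : ∀ Δ, .neg ψ ∈ Δ.1 → Δ ∉ Q)
    (h : .neg (.kh i ψ) ∈ Γ.1) : Γ ∉ (familyModel H).attractor i Q := by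
  suffices hsub : (familyModel H).attractor i Q ⊆ {Δ | .neg (.kh i ψ) ∉ Δ.1} from
    fun hΓ => hsub hΓ h
  refine Model.attractor_subset (fun Δ hk hΔ => ?_) fun χ Δ hex htrans hΔ => ?_
  · exact hH.notMem_knows_of_neg_know_mem hQ (hH.saturated _ Δ.2 _ hΔ) hk
  · obtain ⟨_, hkh, hn, -⟩ := hex Δ rfl
    obtain ⟨Θ, hΘ, hk, hΘψ⟩ := hH.neg_kh _ Δ.2 i χ ψ hΔ hkh hn
    exact htrans ⟨Θ, hΘ⟩ ⟨Δ, ⟨Θ, hΘ⟩, rfl, rfl, hkh, hn, hk⟩ hΘψ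

theorem truth (hH : HintikkaFamily H) (φ : Formula P I) (Γ : (familyModel H).W) :
    (φ ∈ Γ.1 → Sat (familyModel H) Γ φ) ∧ (.neg φ ∈ Γ.1 → ¬ Sat (familyModel H) Γ φ) := by
  induction φ generalizing Γ with
  | bot => exact ⟨fun h => hH.not_blatant _ Γ.2 (.inl h), fun _ h => h⟩
  | atom p => exact ⟨fun h => h, fun hn h => hH.not_blatant _ Γ.2 (.inr ⟨_, h, hn⟩)⟩
  | neg φ ih => exact ⟨(ih Γ).2, fun h => not_not_intro ((ih Γ).1 (hH.saturated _ Γ.2 _ h))⟩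
  | and φ ψ ihφ ihψ =>
    refine ⟨fun h => ?_, fun hn ⟨hφ, hψ⟩ => ?_⟩
    · obtain ⟨hφ, hψ⟩ := hH.saturated _ Γ.2 _ h
      exact ⟨(ihφ Γ).1 hφ, (ihψ Γ).1 hψ⟩
    · obtain ⟨hnφ, -⟩ | ⟨hnφ, -⟩ | ⟨-, hnψ⟩ := hH.saturated _ Γ.2 _ hn
      · exact (ihφ Γ).2 hnφ hφ
      · exact (ihφ Γ).2 hnφ hφ
      · exact (ihψ Γ).2 hnψ hψ
  | know i φ ih =>
    exact ⟨hH.mem_knows_of_know_mem fun Δ => (ih Δ).1,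
      hH.notMem_knows_of_neg_know_mem fun Δ => (ih Δ).2⟩
  | kh i φ ih =>
    rw [sat_kh_iff_mem_attractor]
    exact ⟨hH.mem_attractor_of_kh_mem fun Δ => (ih Δ).1,
      hH.notMem_attractor_of_neg_kh_mem fun Δ => (ih Δ).2⟩

end HintikkaFamily

theorem IsTableau.exists_sat_of_not_tableauClosed {φ0 : Formula P I} (hT : IsTableau φ0 T)
    (h : ¬ TableauClosed T) : ∃ (M : Model P I) (s : M.W), Sat M s φ0 := by
  obtain ⟨S, hS, hopen⟩ : ∃ S, CompleteSubtree T S ∧ ¬ ClosedSubtree T S := by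
    simpa [TableauClosed] using h
  obtain ⟨Γ, hΓ, hroot⟩ := hT.exists_mem_saturatedLabels_label_subset hS hopen hS.1.1
  have hφ0 : φ0 ∈ Γ := hroot (hT.root_label ▸ rfl)
  exact ⟨familyModel (saturatedLabels S), ⟨Γ, hΓ⟩,
    ((hT.hintikkaFamily_saturatedLabels hS hopen).truth φ0 ⟨Γ, hΓ⟩).1 hφ0⟩

theorem satisfiable_iff_tableau_not_closed_general {φ0 : Formula P I} (hT : IsTableau φ0 T) :
    (∃ (M : Model P I) (s : M.W), Sat M s φ0) ↔ ¬ TableauClosed T :=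
  ⟨fun ⟨_, _, hs⟩ => hT.not_tableauClosed_of_sat hs, hT.exists_sat_of_not_tableauClosed⟩

/-- `φ₀` is satisfiable iff the tableau for `φ₀` is not closed. -/
theorem satisfiable_iff_tableau_not_closed {P I : Type} (hI : ∃ i j : I, i ≠ j)
    (φ0 : Formula P I) (T : LTree P I) (hT : IsTableau φ0 T) :
    (∃ (M : Model P I) (s : M.W), Sat M s φ0) ↔ ¬ TableauClosed T :=
  satisfiable_iff_tableau_not_closed_general hT

end ELKh
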